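/- For every ε with 0 < ε < 1 there exists a constant δ > 0 such that for every N₀ there exists a simple graph H on N ≥ N₀ vertices whose girth is at least δ·log(N)/ε and whose fractional chromatic number is strictly larger than 2 + ε; that is, every (p:q)-coloring of H satisfies p > (2+ε)·q. -/

import Mathlib

/-- A `(p:q)`-coloring of `G`: each vertex gets a set of at least `q` colors out of
`p` colors, with adjacent vertices receiving disjoint sets. -/
def HasPQColoring {V : Type*} (G : SimpleGraph V) (p q : ℕ) : Prop :=
  ∃ X : V → Finset (Fin p), (∀ v, q ≤ (X v).card) ∧
    ∀ ⦃u v⦄, G.Adj u v → Disjoint (X u) (X v)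

/-!
Fix `k` and add edges to the empty graph on `n` vertices one at a time, joining only vertices of
degree below a constant `D` that are at distance more than `r`; this never creates a cycle of
length at most `r`. If `D ≥ 32k³`, then as long as there are at most `4k²n` edges,
at most `8k²n/D ≤ n/(4k)` vertices have degree `D`; balls of radius `r` have at most `(D + 1) ^ r`
elements, so for large `n` every vertex set of size at least `n/k` contains a proportion `1/(4k²)`
of all pairs as admissible ones. By averaging, some admissible edge
destroys a proportion `1/(4k²)` of the surviving independent sets of size at least `n/k`. After
`4k²n` edges at most `2 ^ n * (1 - 1/(4k²)) ^ (4k²n) < 1` of them survive, and a graph with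
independence number below `n/k` has fractional chromatic number above `k`.
-/

namespace HighGirth

open Finset SimpleGraph

section DoubleCounting

variable {α β : Type*}

lemma exists_card_le_mul_card_bipartiteBelow (R : α → β → Prop) [∀ a b, Decidable (R a b)]
    {s : Finset α} {t : Finset β} {c : ℕ} (ht : t.Nonempty)
    (h : ∀ a ∈ s, #t ≤ c * #(t.bipartiteAbove R a)) :
    ∃ b ∈ t, #s ≤ c * #(s.bipartiteBelow R b) := by
  refine exists_le_of_sum_le ht ?_
  calc ∑ _b ∈ t, #s = ∑ _a ∈ s, #t := by simp only [sum_const, smul_eq_mul, mul_comm]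
    _ ≤ ∑ a ∈ s, c * #(t.bipartiteAbove R a) := sum_le_sum h
    _ = ∑ b ∈ t, c * #(s.bipartiteBelow R b) := by
      rw [← mul_sum, ← mul_sum, sum_card_bipartiteAbove_eq_sum_card_bipartiteBelow]

end DoubleCounting

section Decay

lemma one_sub_one_div_nonneg {c : ℕ} (hc : 0 < c) : 0 ≤ 1 - 1 / (c : ℝ) :=
  sub_nonneg.2 ((div_le_one₀ (mod_cast hc)).2 (Nat.one_le_cast.2 hc))

lemma one_sub_one_div_pow_mul_two_pow_lt_one {c n : ℕ} (hc : 0 < c) (hn : n ≠ 0) :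
    (1 - 1 / (c : ℝ)) ^ (c * n) * 2 ^ n < 1 := by
  have hbase := one_sub_one_div_nonneg hc
  have hexp : (1 - 1 / (c : ℝ)) ^ c < 1 / 2 :=
    (Real.one_sub_div_pow_le_exp_neg (Nat.one_le_cast.2 hc)).trans_lt Real.exp_neg_one_lt_half
  rw [pow_mul, ← mul_pow]
  exact pow_lt_one₀ (by positivity) (by linarith) hn

end Decay

section SupEdge

variable {V : Type*} {G : SimpleGraph V} {a b x y : V}

lemma mem_edgeSet_of_mem_edges_sup_edge {w : (G ⊔ edge a b).Walk x y} (h : s(a, b) ∉ w.edges)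
    {e : Sym2 V} (he : e ∈ w.edges) : e ∈ G.edgeSet := by
  have hmem := w.edges_subset_edgeSet he
  rw [edgeSet_sup] at hmem
  refine hmem.resolve_right fun hedge ↦ h ?_
  rwa [← Set.mem_singleton_iff.1 (edgeSet_edge_subset hedge)]

lemma edist_le_length_of_notMem_edges (w : (G ⊔ edge a b).Walk x y) (h : s(a, b) ∉ w.edges) :
    G.edist x y ≤ w.length := by
  simpa using edist_le (w.transfer G fun _ ↦ mem_edgeSet_of_mem_edges_sup_edge h)

lemma edist_add_one_le_length_of_mem_edges {w : (G ⊔ edge a b).Walk x x} (hw : w.IsTrail)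
    (h : s(a, b) ∈ w.edges) : G.edist a b + 1 ≤ w.length := by
  classical
  have ha := w.fst_mem_support_of_mem_edges h
  have hc := hw.rotate ha
  have hb : b ∈ (w.rotate a ha).support := by
    simpa using w.snd_mem_support_of_mem_edges h
  set p := (w.rotate a ha).takeUntil b hb
  set q := (w.rotate a ha).dropUntil b hb
  have hpq : p.append q = w.rotate a ha := Walk.take_spec _ hb
  have hlen : w.length = p.length + q.length := by
    rw [← Walk.length_append, hpq, w.length_rotate]
  have hdisj : p.edges.Disjoint q.edges := hc.disjoint_edges_takeUntil_dropUntil hb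
  have hpos {u v : V} (w' : (G ⊔ edge a b).Walk u v) (hw' : s(a, b) ∈ w'.edges) :
      1 ≤ w'.length := w'.length_edges ▸ List.length_pos_of_mem hw'
  rw [hlen, Nat.cast_add]
  by_cases hp : s(a, b) ∈ p.edges
  · rw [SimpleGraph.edist_comm, add_comm (p.length : ℕ∞)]
    exact add_le_add (edist_le_length_of_notMem_edges q (hdisj hp)) (mod_cast hpos p hp)
  · have hq : s(a, b) ∈ q.edges := by
      have hmem := (w.rotate_edges a ha).mem_iff.2 h
      rw [← hpq, Walk.edges_append, List.mem_append] at hmem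
      exact hmem.resolve_left hp
    exact add_le_add (edist_le_length_of_notMem_edges p hp) (mod_cast hpos q hq)

lemma min_egirth_edist_add_one_le_egirth_sup_edge :
    min G.egirth (G.edist a b + 1) ≤ (G ⊔ edge a b).egirth := by
  rw [le_egirth]
  intro v w hw
  by_cases h : s(a, b) ∈ w.edges
  · exact min_le_of_right_le (edist_add_one_le_length_of_mem_edges hw.isTrail h)
  · have hG := fun e (he : e ∈ w.edges) ↦ mem_edgeSet_of_mem_edges_sup_edge h he
    exact min_le_of_left_le (by simpa using egirth_le_length (hw.transfer hG))

lemma degree_sup_edge_le_add_one [G.LocallyFinite] [(G ⊔ edge a b).LocallyFinite] (v : V) :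
    (G ⊔ edge a b).degree v ≤ G.degree v + 1 := by
  classical
  refine (card_le_card fun x ↦ ?_).trans
    (card_insert_le (if v = a then b else a) (G.neighborFinset v))
  simp only [mem_neighborFinset, sup_adj, edge_adj, mem_insert]
  grind

lemma degree_sup_edge_of_ne [G.LocallyFinite] [(G ⊔ edge a b).LocallyFinite] {v : V}
    (hva : v ≠ a) (hvb : v ≠ b) : (G ⊔ edge a b).degree v = G.degree v := by
  simp only [← card_neighborFinset_eq_degree]
  congr 1
  ext x
  simp [edge_adj, hva, hvb]

lemma degree_sup_edge_le [G.LocallyFinite] [(G ⊔ edge a b).LocallyFinite] {D : ℕ}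
    (hD : ∀ v, G.degree v ≤ D) (ha : G.degree a < D) (hb : G.degree b < D) (v : V) :
    (G ⊔ edge a b).degree v ≤ D := by
  by_cases hv : v = a ∨ v = b
  · have hlt : G.degree v < D := by rcases hv with rfl | rfl <;> assumption
    exact (degree_sup_edge_le_add_one v).trans hlt
  · rw [not_or] at hv
    exact (degree_sup_edge_of_ne hv.1 hv.2).trans_le (hD v)

lemma card_edgeFinset_sup_edge_le [Fintype G.edgeSet] [Fintype (G ⊔ edge a b).edgeSet] :
    #(G ⊔ edge a b).edgeFinset ≤ #G.edgeFinset + 1 := by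
  classical
  refine (card_le_card fun e he ↦ ?_).trans (card_insert_le s(a, b) G.edgeFinset)
  rw [mem_edgeFinset, edgeSet_sup] at he
  rw [mem_insert, mem_edgeFinset]
  exact he.symm.imp_left fun hedge ↦ edgeSet_edge_subset hedge

end SupEdge

section Fintype

variable {V : Type*} [Fintype V] {G : SimpleGraph V} {a b : V} {D k r : ℕ}

open scoped Classical in
lemma closedBall_succ_subset (u : V) (r : ℕ) :
    ({v | G.edist u v ≤ (r + 1 : ℕ)} : Finset V) ⊆
      insert u ((G.neighborFinset u).biUnion fun x ↦ {v | G.edist x v ≤ r}) := by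
  intro v hv
  have hdist : G.edist u v ≤ (r + 1 : ℕ) := by simpa only [mem_filter_univ] using hv
  obtain ⟨w, hw⟩ := exists_walk_of_edist_ne_top (hdist.trans_lt (ENat.natCast_lt_top _)).ne
  cases w with
  | nil => exact mem_insert_self ..
  | @cons _ x _ hux w =>
    refine mem_insert_of_mem (mem_biUnion.2 ⟨x, (G.mem_neighborFinset u x).2 hux, ?_⟩)
    rw [← hw, Nat.cast_le, Walk.length_cons, Nat.add_le_add_iff_right] at hdist
    exact mem_filter_univ _ |>.2 ((edist_le w).trans (mod_cast hdist))

open scoped Classical in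
lemma card_closedBall_le (hD : ∀ v, G.degree v ≤ D) (u : V) (r : ℕ) :
    #{v | G.edist u v ≤ r} ≤ (D + 1) ^ r := by
  induction r generalizing u with
  | zero => simp [Finset.filter_eq]
  | succ r ih =>
    calc #{v | G.edist u v ≤ (r + 1 : ℕ)}
        ≤ #((G.neighborFinset u).biUnion fun x ↦ {v | G.edist x v ≤ r}) + 1 :=
          (card_le_card (closedBall_succ_subset u r)).trans (card_insert_le _ _)
      _ ≤ G.degree u * (D + 1) ^ r + 1 := by
          gcongr
          exact card_biUnion_le_card_mul _ _ _ fun x _ ↦ ih x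
      _ ≤ D * (D + 1) ^ r + (D + 1) ^ r := by
          gcongr
          · exact hD u
          · exact Nat.one_le_pow _ _ D.succ_pos
      _ = (D + 1) ^ (r + 1) := by ring

open scoped Classical in
lemma card_le_degree_mul_le (G : SimpleGraph V) (D : ℕ) :
    #{v | D ≤ G.degree v} * D ≤ 2 * #G.edgeFinset := by
  rw [← G.sum_degrees_eq_twice_card_edges, ← smul_eq_mul]
  calc #{v | D ≤ G.degree v} • D ≤ ∑ v with D ≤ G.degree v, G.degree v :=
        card_nsmul_le_sum _ _ _ fun v hv ↦ (mem_filter_univ v).1 hv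
    _ ≤ ∑ v, G.degree v := sum_le_sum_of_subset (filter_subset _ _)

open scoped Classical in
/-- The pairs that may be joined by a new edge: both endpoints have degree below the cap `D`, and
their distance exceeds `r`. -/
noncomputable def addablePairs (G : SimpleGraph V) (D r : ℕ) : Finset (V × V) :=
  {e | G.degree e.1 < D ∧ G.degree e.2 < D ∧ r < G.edist e.1 e.2}

open scoped Classical in
lemma card_mul_card_sub_le_card_addablePairs (hD : ∀ v, G.degree v ≤ D) (T : Finset V)
    (hT : ∀ v ∈ T, G.degree v < D) :
    #T * (#T - (D + 1) ^ r) ≤ #{e ∈ addablePairs G D r | e.1 ∈ T ∧ e.2 ∈ T} := by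
  have hfar (u : V) : #T - (D + 1) ^ r ≤ #{v ∈ T | r < G.edist u v} := by
    have hnear : #{v ∈ T | G.edist u v ≤ r} ≤ (D + 1) ^ r :=
      (card_le_card (filter_subset_filter _ T.subset_univ)).trans (card_closedBall_le hD u r)
    have hsplit := card_filter_add_card_filter_not (s := T) (fun v ↦ G.edist u v ≤ r)
    simp only [not_le] at hsplit
    omega
  calc #T * (#T - (D + 1) ^ r)
      ≤ ∑ u ∈ T, #{v ∈ T | r < G.edist u v} := by
        rw [← smul_eq_mul]
        exact card_nsmul_le_sum _ _ _ fun u _ ↦ hfar u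
    _ = #(T.sigma fun u ↦ {v ∈ T | r < G.edist u v}) := (card_sigma _ _).symm
    _ ≤ #{e ∈ addablePairs G D r | e.1 ∈ T ∧ e.2 ∈ T} := by
        refine card_le_card_of_injOn (fun e ↦ (e.1, e.2)) ?_ ?_
        · rintro ⟨u, v⟩ huv
          obtain ⟨hu, hv, hdist⟩ : u ∈ T ∧ v ∈ T ∧ r < G.edist u v := by simpa using huv
          simp [addablePairs, hu, hv, hdist, hT]
        · rintro ⟨u, v⟩ - ⟨u', v'⟩ - h
          simpa using h

open scoped Classical in
lemma sq_card_le_mul_card_addablePairs (hk : 0 < k) (hkD : 32 * k ^ 3 ≤ D)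
    (hball : 4 * k * (D + 1) ^ r ≤ Fintype.card V) (hD : ∀ v, G.degree v ≤ D)
    (hE : #G.edgeFinset ≤ 4 * k ^ 2 * Fintype.card V) (S : Finset V)
    (hS : Fintype.card V ≤ k * #S) :
    Fintype.card V ^ 2 ≤ 4 * k ^ 2 * #{e ∈ addablePairs G D r | e.1 ∈ S ∧ e.2 ∈ S} := by
  set n := Fintype.card V
  set F : Finset V := {v | D ≤ G.degree v}
  set T := S \ F
  have hF : 4 * k * #F ≤ n := by
    have h := (Nat.mul_le_mul_left #F hkD).trans (card_le_degree_mul_le G D)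
    refine le_of_mul_le_mul_left (a := 8 * k ^ 2) ?_ (by positivity)
    linarith
  have hT : n + 2 * k * (D + 1) ^ r ≤ 2 * k * #T := by
    have h : k * #S ≤ k * (#T + #F) := by
      gcongr
      exact tsub_le_iff_right.1 (le_card_sdiff F S)
    linarith
  calc n ^ 2 = n * n := sq n
    _ ≤ (2 * k * #T) * (2 * k * (#T - (D + 1) ^ r)) := by
        gcongr
        · exact (Nat.le_add_right _ _).trans hT
        · rw [Nat.mul_sub]
          exact Nat.le_sub_of_add_le hT
    _ = 4 * k ^ 2 * (#T * (#T - (D + 1) ^ r)) := by ring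
    _ ≤ 4 * k ^ 2 * #{e ∈ addablePairs G D r | e.1 ∈ T ∧ e.2 ∈ T} := by
        gcongr
        refine card_mul_card_sub_le_card_addablePairs hD T fun v hv ↦ ?_
        simpa [T, F] using (mem_sdiff.1 hv).2
    _ ≤ 4 * k ^ 2 * #{e ∈ addablePairs G D r | e.1 ∈ S ∧ e.2 ∈ S} := by
        gcongr <;> exact sdiff_subset

open scoped Classical in
/-- The independent sets containing at least a fraction `1 / k` of the vertices, written without
division. -/
noncomputable def largeIndepSets (G : SimpleGraph V) (k : ℕ) : Finset (Finset V) :=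
  {S | G.IsIndepSet S ∧ Fintype.card V ≤ k * #S}

open scoped Classical in
lemma largeIndepSets_sup_edge (hab : a ≠ b) :
    largeIndepSets (G ⊔ edge a b) k = {S ∈ largeIndepSets G k | ¬(a ∈ S ∧ b ∈ S)} := by
  ext S
  have hindep : (G ⊔ edge a b).IsIndepSet (S : Set V) ↔
      G.IsIndepSet (S : Set V) ∧ ¬(a ∈ S ∧ b ∈ S) := by
    simp only [IsIndepSet, Set.Pairwise, sup_adj, edge_adj, mem_coe]
    grind
  simp only [largeIndepSets, mem_filter, mem_univ, true_and, hindep]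
  tauto

open scoped Classical in
lemma exists_addablePair_card_largeIndepSets_le (hk : 0 < k) (hkD : 32 * k ^ 3 ≤ D)
    (hball : 4 * k * (D + 1) ^ r ≤ Fintype.card V) (hD : ∀ v, G.degree v ≤ D)
    (hE : #G.edgeFinset ≤ 4 * k ^ 2 * Fintype.card V) :
    ∃ e ∈ addablePairs G D r,
      #(largeIndepSets G k) ≤ 4 * k ^ 2 * #{S ∈ largeIndepSets G k | e.1 ∈ S ∧ e.2 ∈ S} := by
  have hcount := sq_card_le_mul_card_addablePairs hk hkD hball hD hE
  have hcard : #(addablePairs G D r) ≤ Fintype.card V ^ 2 :=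
    (card_le_univ _).trans_eq (by rw [Fintype.card_prod, sq])
  have hne : (addablePairs G D r).Nonempty := by
    have hV : 0 < Fintype.card V := lt_of_lt_of_le (by positivity) hball
    have h := hcount univ (by rw [card_univ]; exact Nat.le_mul_of_pos_left _ hk)
    have hpos := Nat.pos_of_mul_pos_left ((pow_pos hV 2).trans_le h)
    exact (card_pos.1 hpos).mono (filter_subset _ _)
  refine exists_card_le_mul_card_bipartiteBelow
    (fun (S : Finset V) (e : V × V) ↦ e.1 ∈ S ∧ e.2 ∈ S) hne fun S hS ↦ ?_
  exact hcard.trans (hcount S (mem_filter.1 hS).2.2)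

open scoped Classical in
lemma card_largeIndepSets_sup_edge_le {c : ℕ} (hc : 0 < c) (hab : a ≠ b)
    (h : #(largeIndepSets G k) ≤ c * #{S ∈ largeIndepSets G k | a ∈ S ∧ b ∈ S}) :
    (#(largeIndepSets (G ⊔ edge a b) k) : ℝ) ≤ (1 - 1 / c) * #(largeIndepSets G k) := by
  have hsplit : (#{S ∈ largeIndepSets G k | a ∈ S ∧ b ∈ S} : ℝ) +
      #(largeIndepSets (G ⊔ edge a b) k) = #(largeIndepSets G k) := by
    rw [largeIndepSets_sup_edge hab]
    exact mod_cast card_filter_add_card_filter_not _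
  have hle : (#(largeIndepSets G k) : ℝ) / c ≤ #{S ∈ largeIndepSets G k | a ∈ S ∧ b ∈ S} := by
    rw [div_le_iff₀' (by positivity)]
    exact mod_cast h
  rw [sub_mul, one_mul, one_div_mul_eq_div]
  linarith

open scoped Classical in
lemma exists_card_edgeFinset_le_card_largeIndepSets_le (hk : 0 < k) (hkD : 32 * k ^ 3 ≤ D)
    (hball : 4 * k * (D + 1) ^ r ≤ Fintype.card V) {m : ℕ}
    (hm : m ≤ 4 * k ^ 2 * Fintype.card V) :
    ∃ G : SimpleGraph V, r ≤ G.egirth ∧ (∀ v, G.degree v ≤ D) ∧ #G.edgeFinset ≤ m ∧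
      (#(largeIndepSets G k) : ℝ) ≤ (1 - 1 / (4 * k ^ 2 : ℕ)) ^ m * 2 ^ Fintype.card V := by
  induction m with
  | zero =>
    refine ⟨⊥, by simp, by simp, by simp, ?_⟩
    have h := card_le_univ (largeIndepSets (⊥ : SimpleGraph V) k)
    rw [Fintype.card_finset] at h
    simpa using (mod_cast h : (#(largeIndepSets (⊥ : SimpleGraph V) k) : ℝ) ≤ 2 ^ Fintype.card V)
  | succ m ih =>
    obtain ⟨G, hgirth, hD, hE, hlarge⟩ := ih (Nat.le_of_succ_le hm)
    obtain ⟨⟨a, b⟩, hab, hkill⟩ := exists_addablePair_card_largeIndepSets_le hk hkD hball hD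
      (hE.trans (Nat.le_of_succ_le hm))
    obtain ⟨ha, hb, hdist⟩ := (mem_filter_univ _).1 hab
    have hne : a ≠ b := by
      rintro rfl
      simp at hdist
    refine ⟨G ⊔ edge a b, ?_, fun v ↦ ?_, ?_, ?_⟩
    · exact (le_min hgirth (hdist.le.trans le_self_add)).trans
        min_egirth_edist_add_one_le_egirth_sup_edge
    · convert degree_sup_edge_le hD ha hb v
    · convert Nat.le_trans card_edgeFinset_sup_edge_le (Nat.add_le_add_right hE 1)
    · have hfactor : (0 : ℝ) ≤ 1 - 1 / (4 * k ^ 2 : ℕ) :=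
        one_sub_one_div_nonneg (by positivity)
      calc (#(largeIndepSets (G ⊔ edge a b) k) : ℝ)
          ≤ (1 - 1 / (4 * k ^ 2 : ℕ)) * #(largeIndepSets G k) :=
            card_largeIndepSets_sup_edge_le (by positivity) hne hkill
        _ ≤ (1 - 1 / (4 * k ^ 2 : ℕ)) *
              ((1 - 1 / (4 * k ^ 2 : ℕ)) ^ m * 2 ^ Fintype.card V) := by gcongr
        _ = (1 - 1 / (4 * k ^ 2 : ℕ)) ^ (m + 1) * 2 ^ Fintype.card V := by ring

lemma exists_le_egirth_mul_indepNum_lt (hk : 0 < k) (hkD : 32 * k ^ 3 ≤ D)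
    (hball : 4 * k * (D + 1) ^ r ≤ Fintype.card V) :
    ∃ G : SimpleGraph V, r ≤ G.egirth ∧ k * G.indepNum < Fintype.card V := by
  obtain ⟨G, hgirth, -, -, hlarge⟩ :=
    exists_card_edgeFinset_le_card_largeIndepSets_le hk hkD hball le_rfl
  refine ⟨G, hgirth, ?_⟩
  have hV : Fintype.card V ≠ 0 := (lt_of_lt_of_le (by positivity) hball).ne'
  have hempty : largeIndepSets G k = ∅ := by
    rw [← card_eq_zero, ← Nat.lt_one_iff, ← Nat.cast_lt (α := ℝ), Nat.cast_one]
    exact hlarge.trans_lt (one_sub_one_div_pow_mul_two_pow_lt_one (by positivity) hV)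
  obtain ⟨S, hS⟩ := G.exists_isNIndepSet_indepNum
  by_contra! hle
  have hmem : S ∈ largeIndepSets G k := by
    simpa [largeIndepSets, hS.isIndepSet, hS.card_eq] using hle
  simp [hempty] at hmem

lemma card_mul_le_mul_indepNum {p q : ℕ} (h : HasPQColoring G p q) :
    Fintype.card V * q ≤ p * G.indepNum := by
  classical
  obtain ⟨X, hcard, hdisj⟩ := h
  have hclass (c : Fin p) : G.IsIndepSet (({v | c ∈ X v} : Finset V) : Set V) := by
    intro u hu v hv _ hadj
    exact disjoint_left.1 (hdisj hadj) ((mem_filter_univ u).1 hu) ((mem_filter_univ v).1 hv)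
  simpa using card_nsmul_le_card_nsmul (fun v c ↦ c ∈ X v) (s := univ) (t := univ)
    (fun v _ ↦ by simpa [bipartiteAbove] using hcard v)
    (fun c _ ↦ (hclass c).card_le_indepNum)

end Fintype

end HighGirth

theorem exists_high_girth_high_fractional_chromatic_general (K : ℝ) :
    ∃ δ : ℝ, 0 < δ ∧ ∀ N₀ : ℕ, ∃ (N : ℕ) (H : SimpleGraph (Fin N)),
      N₀ ≤ N ∧
      (∀ (v : Fin N) (w : H.Walk v v), w.IsCycle → δ * Real.log N ≤ (w.length : ℝ)) ∧
      (∀ p q : ℕ, 1 ≤ q → HasPQColoring H p q → K * (q : ℝ) < (p : ℝ)) := by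
  obtain ⟨k, hKk, hk⟩ : ∃ k : ℕ, K < k ∧ 0 < k := by
    obtain ⟨k, hk⟩ := exists_nat_gt (max K 0)
    exact ⟨k, (le_max_left ..).trans_lt hk, Nat.cast_pos.1 ((le_max_right K 0).trans_lt hk)⟩
  set b := 4 * k * (32 * k ^ 3 + 1)
  have hb : 1 < b := one_lt_mul_of_lt_of_le (by omega) (Nat.succ_pos _)
  have hlog : 0 < Real.log b := Real.log_pos (mod_cast hb)
  refine ⟨(Real.log b)⁻¹, inv_pos.2 hlog, fun N₀ ↦ ?_⟩
  have hsize : 4 * k * (32 * k ^ 3 + 1) ^ (N₀ + 1) ≤ Fintype.card (Fin (b ^ (N₀ + 1))) := by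
    rw [Fintype.card_fin, mul_pow]
    gcongr
    exact Nat.le_self_pow N₀.succ_ne_zero _
  obtain ⟨H, hgirth, hindep⟩ := HighGirth.exists_le_egirth_mul_indepNum_lt hk le_rfl hsize
  rw [Fintype.card_fin] at hindep
  refine ⟨b ^ (N₀ + 1), H, ?_, fun v w hw ↦ ?_, fun p q hq hX ↦ ?_⟩
  · exact N₀.le_succ.trans (Nat.lt_pow_self hb).le
  · rw [Nat.cast_pow, Real.log_pow, mul_comm, mul_assoc, mul_inv_cancel₀ hlog.ne', mul_one]
    exact mod_cast hgirth.trans (SimpleGraph.egirth_le_length hw)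
  · have hcol := HighGirth.card_mul_le_mul_indepNum hX
    rw [Fintype.card_fin] at hcol
    have hkq : k * q ≤ p := by
      refine le_of_mul_le_mul_left ?_ (Nat.zero_le _ |>.trans_lt hindep)
      calc b ^ (N₀ + 1) * (k * q) = k * (b ^ (N₀ + 1) * q) := by ring
        _ ≤ k * (p * H.indepNum) := Nat.mul_le_mul_left k hcol
        _ = p * (k * H.indepNum) := by ring
        _ ≤ p * b ^ (N₀ + 1) := Nat.mul_le_mul_left p hindep.le
        _ = b ^ (N₀ + 1) * p := mul_comm ..
    calc K * q < k * q := by gcongr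
      _ ≤ p := mod_cast hkq

/-- for every `0 < ε < 1` there is a constant `δ > 0` such that for
every `N₀` there is a graph `H` on `N ≥ N₀` vertices whose girth is at least
`δ·log N/ε` (every cycle has length at least `δ·log N/ε`) and whose fractional
chromatic number is strictly larger than `2 + ε`, i.e. every `(p:q)`-coloring of `H`
satisfies `p > (2+ε)·q`. -/
theorem exists_high_girth_high_fractional_chromatic (ε : ℝ) (hε0 : 0 < ε) (hε1 : ε < 1) :
    ∃ δ : ℝ, 0 < δ ∧ ∀ N₀ : ℕ, ∃ (N : ℕ) (H : SimpleGraph (Fin N)),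
      N₀ ≤ N ∧
      (∀ (v : Fin N) (w : H.Walk v v), w.IsCycle → δ * Real.log N / ε ≤ (w.length : ℝ)) ∧
      (∀ p q : ℕ, 1 ≤ q → q ≤ p → HasPQColoring H p q → (2 + ε) * (q : ℝ) < (p : ℝ)) := by
  obtain ⟨δ, hδ, h⟩ := exists_high_girth_high_fractional_chromatic_general (2 + ε)
  refine ⟨ε * δ, mul_pos hε0 hδ, fun N₀ ↦ ?_⟩
  obtain ⟨N, H, hN, hgirth, hcol⟩ := h N₀
  refine ⟨N, H, hN, fun v w hw ↦ ?_, fun p q hq _ ↦ hcol p q hq⟩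
  rw [mul_assoc, mul_div_cancel_left₀ _ hε0.ne']
  exact hgirth v w hw
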